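/- arXiv:1706.06297 — 2 statements merged into one kernel-verified Lean document; each statement's English description precedes it below -/
import Mathlib

section
/- Let H be a real Hilbert space, f : H → ℝ a convex function, μ > 0 and x ∈ H. Let z* be the minimizer of z ↦ f(z) + (1/(2μ))‖z − x‖², and let g be any subgradient of f at x (i.e. f(y) ≥ f(x) + ⟨g, y − x⟩ for all y ∈ H). Then (1/μ)‖x − z*‖ ≤ ‖g‖; equivalently, the gradient of the Moreau envelope satisfies ‖∇f_μ(x)‖ ≤ ‖g‖. -/
open scoped RealInnerProductSpace

/-!
Moving from the proximal point `z` towards `x`, convexity bounds `f` above by its chord while the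
penalty `c * ‖· - x‖ ^ 2` decreases at rate `2 * c * ‖x - z‖ ^ 2`; minimality of `z` therefore
forces `2 * c * ‖x - z‖ ^ 2 ≤ f x - f z`. A subgradient `g` at `x` gives
`f x - f z ≤ ‖g‖ * ‖x - z‖`, and one factor `‖x - z‖` cancels. Only the behaviour of the norm
along the segment from `z` to `x` matters, so no inner product is needed.
-/

open AffineMap Filter Set Topology

theorem le_add_of_isMinOn_add_of_hasDerivWithinAt {E : Type*} [AddCommGroup E] [Module ℝ E]
    {s : Set E} {f h : E → ℝ} {x z : E} {h' : ℝ} (hf : ConvexOn ℝ s f) (hx : x ∈ s) (hz : z ∈ s)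
    (hmin : IsMinOn (fun y => f y + h y) s z)
    (hh : HasDerivWithinAt (fun t : ℝ => h (lineMap z x t)) h' (Ioi 0) 0) :
    f z ≤ f x + h' := by
  have slope_tendsto :
      Tendsto (slope (fun t : ℝ => h (lineMap z x t)) 0) (𝓝[>] 0) (𝓝 h') :=
    (hasDerivWithinAt_iff_tendsto_slope' self_notMem_Ioi).1 hh
  suffices f z - f x ≤ h' by linarith
  refine ge_of_tendsto slope_tendsto ?_
  filter_upwards [Ioo_mem_nhdsGT (zero_lt_one' ℝ)] with t ⟨ht0, ht1⟩
  have chord : f (lineMap z x t) ≤ (1 - t) * f z + t * f x := by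
    simpa only [lineMap_apply_module, smul_eq_mul] using
      hf.2 hz hx (sub_nonneg.2 ht1.le) ht0.le (sub_add_cancel 1 t)
  have minimality : f z + h z ≤ f (lineMap z x t) + h (lineMap z x t) :=
    hmin (hf.1.lineMap_mem hz hx ⟨ht0.le, ht1.le⟩)
  rw [slope_def_field, lineMap_apply_zero, sub_zero, le_div_iff₀ ht0]
  linarith

section SeminormedSpace

variable {E : Type*} [SeminormedAddCommGroup E] [NormedSpace ℝ E]

theorem hasDerivAt_norm_lineMap_sub_right_sq (x z : E) :
    HasDerivAt (fun t : ℝ => ‖lineMap z x t - x‖ ^ 2) (-2 * ‖x - z‖ ^ 2) 0 := by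
  have norm_sq_eq (t : ℝ) : ‖lineMap z x t - x‖ ^ 2 = (1 - t) ^ 2 * ‖x - z‖ ^ 2 := by
    rw [← dist_eq_norm, dist_lineMap_right, dist_comm, dist_eq_norm, mul_pow, Real.norm_eq_abs,
      sq_abs]
  simp only [norm_sq_eq]
  simpa using (((hasDerivAt_id (0 : ℝ)).const_sub 1).pow 2).mul_const (‖x - z‖ ^ 2)

variable {s : Set E} {f : E → ℝ} {c : ℝ} {x z : E}

theorem two_mul_mul_norm_sub_sq_le_of_isMinOn (hf : ConvexOn ℝ s f) (hx : x ∈ s)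
    (hz : z ∈ s) (hmin : IsMinOn (fun y => f y + c * ‖y - x‖ ^ 2) s z) :
    2 * c * ‖x - z‖ ^ 2 ≤ f x - f z := by
  have first_order : f z ≤ f x + c * (-2 * ‖x - z‖ ^ 2) :=
    le_add_of_isMinOn_add_of_hasDerivWithinAt hf hx hz hmin
      ((hasDerivAt_norm_lineMap_sub_right_sq x z).const_mul c).hasDerivWithinAt
  linarith

theorem stmt_0_general (hf : ConvexOn ℝ s f) (hx : x ∈ s) (hz : z ∈ s)
    (hmin : IsMinOn (fun y => f y + c * ‖y - x‖ ^ 2) s z)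
    (g : StrongDual ℝ E) (hg : ∀ y ∈ s, f x + g (y - x) ≤ f y) :
    2 * c * ‖x - z‖ ≤ ‖g‖ := by
  rcases (norm_nonneg (x - z)).eq_or_lt with hxz | hxz
  · simp [← hxz]
  refine le_of_mul_le_mul_right ?_ hxz
  calc 2 * c * ‖x - z‖ * ‖x - z‖
    _ = 2 * c * ‖x - z‖ ^ 2 := by ring
    _ ≤ f x - f z := two_mul_mul_norm_sub_sq_le_of_isMinOn hf hx hz hmin
    _ ≤ -g (z - x) := by linarith [hg z hz]
    _ = g (x - z) := by rw [← map_neg, neg_sub]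
    _ ≤ ‖g‖ * ‖x - z‖ := (le_abs_self _).trans (g.le_opNorm _)

end SeminormedSpace

/-- Lemma 1 (bounding the gradient of the Moreau envelope by a subgradient):
if `zstar` minimizes `z ↦ f z + 1/(2μ) ‖z - x‖²` and `g` is a subgradient of the
convex function `f` at `x`, then `(1/μ) ‖x - zstar‖ ≤ ‖g‖`, i.e.
`‖∇f_μ(x)‖ ≤ ‖g‖`. -/
theorem stmt_0
    {H : Type*} [NormedAddCommGroup H] [InnerProductSpace ℝ H] [CompleteSpace H]
    (f : H → ℝ) (hconv : ConvexOn ℝ Set.univ f)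
    (μ : ℝ) (hμ : 0 < μ) (x : H)
    (zstar : H)
    (hzstar : IsMinOn (fun z => f z + 1 / (2 * μ) * ‖z - x‖ ^ 2) Set.univ zstar)
    (g : H) (hg : ∀ y : H, f y ≥ f x + ⟪g, y - x⟫) :
    (1 / μ) * ‖x - zstar‖ ≤ ‖g‖ := by
  have weight : 2 * (1 / (2 * μ)) = 1 / μ := by field_simp
  simpa only [weight, innerSL_apply_norm] using
    stmt_0_general hconv (mem_univ x) (mem_univ zstar) hzstar (innerSL ℝ g) fun y _ => hg y
end

section
/- Let (Ω, P) be a probability space, σ : Ω → [0, ∞) a random variable, μ₀ > 0, γ ∈ (0,1], and k ≥ 1 an integer. Then E[(1 + (μ₀/k^γ) σ)^{−2}] ≤ ( E[(1 + μ₀σ)^{−2}] )^{1/k^γ}. -/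
open MeasureTheory

/-!
For `X = μ₀ σ` and `p = 1 / k ^ γ ∈ [0, 1]`, Bernoulli's inequality `(1 + X) ^ p ≤ 1 + p X` bounds
the left-hand integrand pointwise by the `p`-th power of the right-hand one. Jensen's inequality for
the concave function `t ↦ t ^ p` then moves the power outside the expectation.
-/

section Bernoulli

variable {p x : ℝ}

lemma one_div_one_add_mul_le_one_div_one_add_rpow (hp₀ : 0 ≤ p) (hp₁ : p ≤ 1) (hx : -1 < x) :
    1 / (1 + p * x) ≤ (1 / (1 + x)) ^ p := by
  have hx₀ : 0 < 1 + x := by linarith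
  calc 1 / (1 + p * x) ≤ 1 / (1 + x) ^ p :=
        one_div_le_one_div_of_le (Real.rpow_pos_of_pos hx₀ p)
          (rpow_one_add_le_one_add_mul_self hx.le hp₀ hp₁)
    _ = (1 / (1 + x)) ^ p := by rw [Real.div_rpow zero_le_one hx₀.le, Real.one_rpow]

lemma one_div_one_add_mul_rpow_le {q : ℝ} (hp₀ : 0 ≤ p) (hp₁ : p ≤ 1) (hq : 0 ≤ q) (hx : -1 < x) :
    (1 / (1 + p * x)) ^ q ≤ ((1 / (1 + x)) ^ q) ^ p := by
  have hx₀ : 0 ≤ 1 / (1 + x) := one_div_nonneg.2 (by linarith)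
  have hpx₀ : 0 ≤ 1 / (1 + p * x) := one_div_nonneg.2 (by nlinarith)
  calc (1 / (1 + p * x)) ^ q ≤ ((1 / (1 + x)) ^ p) ^ q :=
        Real.rpow_le_rpow hpx₀ (one_div_one_add_mul_le_one_div_one_add_rpow hp₀ hp₁ hx) hq
    _ = ((1 / (1 + x)) ^ q) ^ p := by rw [← Real.rpow_mul hx₀, mul_comm, Real.rpow_mul hx₀]

end Bernoulli

section Jensen

variable {Ω : Type*} [MeasurableSpace Ω] {P : Measure Ω} {f : Ω → ℝ} {p : ℝ}

lemma integrable_rpow_const_of_le_one [IsFiniteMeasure P] (hp₀ : 0 ≤ p) (hp₁ : p ≤ 1)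
    (hf₀ : 0 ≤ᵐ[P] f) (hf : Integrable f P) : Integrable (fun ω ↦ f ω ^ p) P := by
  have hfp : MemLp f (ENNReal.ofReal p) P :=
    (memLp_one_iff_integrable.2 hf).mono_exponent (ENNReal.ofReal_le_one.2 hp₁)
  refine hfp.integrable_norm_rpow'.congr ?_
  filter_upwards [hf₀] with ω hω
  rw [Real.norm_of_nonneg hω, ENNReal.toReal_ofReal hp₀]

lemma integral_rpow_le_rpow_integral [IsProbabilityMeasure P] (hp₀ : 0 ≤ p) (hp₁ : p ≤ 1)
    (hf₀ : 0 ≤ᵐ[P] f) (hf : Integrable f P) : ∫ ω, f ω ^ p ∂P ≤ (∫ ω, f ω ∂P) ^ p :=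
  (Real.concaveOn_rpow hp₀ hp₁).le_map_integral (Real.continuous_rpow_const hp₀).continuousOn
    isClosed_Ici hf₀ hf (integrable_rpow_const_of_le_one hp₀ hp₁ hf₀ hf)

end Jensen

section NonnegativeRandomVariable

variable {Ω : Type*} [MeasurableSpace Ω] {P : Measure Ω} {X : Ω → ℝ} {q : ℝ}

lemma integrable_one_div_one_add_rpow [IsFiniteMeasure P] (hX : AEMeasurable X P)
    (hX₀ : 0 ≤ᵐ[P] X) (hq : 0 ≤ q) : Integrable (fun ω ↦ (1 / (1 + X ω)) ^ q) P := by
  refine Integrable.of_mem_Icc 0 1 (by fun_prop) ?_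
  filter_upwards [hX₀] with ω (hω : 0 ≤ X ω)
  have hbase : 1 / (1 + X ω) ≤ 1 := div_le_one_of_le₀ (by linarith) (by linarith)
  exact ⟨by positivity, Real.rpow_le_one (by positivity) hbase hq⟩

theorem stmt_10_general [IsProbabilityMeasure P] (hX : AEMeasurable X P) (hX₀ : 0 ≤ᵐ[P] X)
    {p : ℝ} (hp₀ : 0 ≤ p) (hp₁ : p ≤ 1) (hq : 0 ≤ q) :
    ∫ ω, (1 / (1 + p * X ω)) ^ q ∂P ≤ (∫ ω, (1 / (1 + X ω)) ^ q ∂P) ^ p := by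
  have hint := integrable_one_div_one_add_rpow hX hX₀ hq
  have hnonneg : 0 ≤ᵐ[P] fun ω ↦ (1 / (1 + X ω)) ^ q := by
    filter_upwards [hX₀] with ω (hω : 0 ≤ X ω)
    positivity
  calc ∫ ω, (1 / (1 + p * X ω)) ^ q ∂P ≤ ∫ ω, ((1 / (1 + X ω)) ^ q) ^ p ∂P := by
        refine integral_mono_of_nonneg ?_ (integrable_rpow_const_of_le_one hp₀ hp₁ hnonneg hint) ?_
        · filter_upwards [hX₀] with ω (hω : 0 ≤ X ω)
          positivity
        · filter_upwards [hX₀] with ω (hω : 0 ≤ X ω)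
          exact one_div_one_add_mul_rpow_le hp₀ hp₁ hq (by linarith)
    _ ≤ (∫ ω, (1 / (1 + X ω)) ^ q ∂P) ^ p := integral_rpow_le_rpow_integral hp₀ hp₁ hnonneg hint

end NonnegativeRandomVariable

/-- For a nonnegative random variable `σ`, `μ₀ > 0`, `γ ∈ (0,1]` and integer `k ≥ 1`:
`E[(1 + (μ₀/k^γ) σ)⁻²] ≤ (E[(1 + μ₀ σ)⁻²])^(1/k^γ)`. -/
theorem stmt_10
    {Ω : Type*} [MeasurableSpace Ω] (P : Measure Ω) [IsProbabilityMeasure P]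
    (σ : Ω → ℝ) (hσmeas : Measurable σ) (hσ0 : ∀ S, 0 ≤ σ S)
    (μ₀ : ℝ) (hμ₀ : 0 < μ₀) (γ : ℝ) (hγ0 : 0 < γ) (hγ1 : γ ≤ 1)
    (k : ℕ) (hk : 1 ≤ k) :
    (∫ S, (1 / (1 + μ₀ / (k : ℝ) ^ γ * σ S)) ^ 2 ∂P) ≤
      (∫ S, (1 / (1 + μ₀ * σ S)) ^ 2 ∂P) ^ (1 / (k : ℝ) ^ γ) := by
  have hkγ : 1 ≤ (k : ℝ) ^ γ := Real.one_le_rpow (mod_cast hk) hγ0.le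
  have hscale (S : Ω) : μ₀ / (k : ℝ) ^ γ * σ S = 1 / (k : ℝ) ^ γ * (μ₀ * σ S) := by ring
  simpa only [hscale, Real.rpow_two] using
    stmt_10_general (P := P) (X := fun S ↦ μ₀ * σ S) (by fun_prop)
      (ae_of_all P fun S ↦ mul_nonneg hμ₀.le (hσ0 S)) (by positivity)
      (div_le_one_of_le₀ hkγ (by positivity)) zero_le_two
end
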